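/- arXiv:2412.00817 — 2 statements merged into one kernel-verified Lean document; each statement's English description precedes it below -/
import Mathlib

section
/- Let Ω ⊂ ℝⁿ (n ≥ 3) be a smooth bounded open set and let (G_α) be functions on Ω × Ω (off the diagonal) satisfying for all α and all x ≠ y in Ω: 0 ≤ G_α(y,x) ≤ C₀ |y−x|^{2−n} min{1, d(y,∂Ω) d(x,∂Ω) / |y−x|²} for some constant C₀. Then for every open set U ⊂ Ω there exists a constant C(U), with C(U) → 0 as the Lebesgue measure |U| → 0, such that ∫_U G_α(y,x) dx ≤ C(U) d(y,∂Ω) for all y ∈ Ω and all α. -/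
open MeasureTheory Filter Topology Metric
open scoped RealInnerProductSpace

noncomputable section

/-- Euclidean space ℝⁿ. -/
abbrev En (n : ℕ) := EuclideanSpace ℝ (Fin n)

/-- The Laplacian of `f` at `x`, computed as the sum of the second partial derivatives
in the coordinate directions. -/
def lap {n : ℕ} (f : En n → ℝ) (x : En n) : ℝ :=
  ∑ i : Fin n, fderiv ℝ (fun y => fderiv ℝ f y (EuclideanSpace.single i 1)) x
    (EuclideanSpace.single i 1)

/-- The critical Sobolev exponent `2* = 2n/(n-2)`. -/
def twoStar (n : ℕ) : ℝ := 2 * n / (n - 2)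

/-- Smooth compactly supported test functions in `Ω` (a dense subspace of `H¹₀(Ω)`). -/
def TestFun {n : ℕ} (Ω : Set (En n)) (v : En n → ℝ) : Prop :=
  ContDiff ℝ (⊤ : ℕ∞) v ∧ HasCompactSupport v ∧ tsupport v ⊆ Ω

/-- The quadratic form `∫_Ω (|∇v|² + h v²) dx` of the operator `-Δ + h`. -/
def energy {n : ℕ} (Ω : Set (En n)) (h v : En n → ℝ) : ℝ :=
  ∫ x in Ω, (‖fderiv ℝ v x‖ ^ 2 + h x * v x ^ 2)

/-- Coercivity of `-Δ + h` on `H¹₀(Ω)`. -/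
def Coercive {n : ℕ} (Ω : Set (En n)) (h : En n → ℝ) : Prop :=
  ∃ C > 0, ∀ v, TestFun Ω v → C * ∫ x in Ω, ‖fderiv ℝ v x‖ ^ 2 ≤ energy Ω h v

/-- The Rayleigh–Sobolev quotient associated with `-Δ + h` on `Ω`. -/
def rayleigh {n : ℕ} (Ω : Set (En n)) (h v : En n → ℝ) : ℝ :=
  energy Ω h v / (∫ x in Ω, |v x| ^ twoStar n) ^ (2 / twoStar n)

/-- `I_h(Ω)`: the infimum of the Rayleigh–Sobolev quotient over nonzero functions. -/
def Ih {n : ℕ} (Ω : Set (En n)) (h : En n → ℝ) : ℝ :=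
  sInf (rayleigh Ω h '' {v | TestFun Ω v ∧ v ≠ 0})

/-- `K_n^{-2}`: the best constant in the Sobolev inequality on `ℝⁿ`. -/
def KnInvSq (n : ℕ) : ℝ :=
  sInf ((fun v : En n → ℝ =>
      (∫ x, ‖fderiv ℝ v x‖ ^ 2) / (∫ x, |v x| ^ twoStar n) ^ (2 / twoStar n)) ''
    {v : En n → ℝ | ContDiff ℝ (⊤ : ℕ∞) v ∧ HasCompactSupport v ∧ v ≠ 0})

/-- `v` is a (classical) solution of `-Δv + h v = |v|^{2*-2} v` in `Ω`, `v = 0` on `∂Ω`. -/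
def IsSolution {n : ℕ} (Ω : Set (En n)) (h v : En n → ℝ) : Prop :=
  ContDiffOn ℝ 2 v (closure Ω) ∧
  (∀ x ∈ Ω, -lap v x + h x * v x = |v x| ^ (twoStar n - 2) * v x) ∧
  ∀ x ∈ frontier Ω, v x = 0

/-- `v` changes sign in `Ω`: both its positive and negative parts are nonzero. -/
def SignChanging {n : ℕ} (Ω : Set (En n)) (v : En n → ℝ) : Prop :=
  (∃ x ∈ Ω, 0 < v x) ∧ ∃ x ∈ Ω, v x < 0

/-- The sup norm of `v` on `Ω̄`. -/
def supNorm {n : ℕ} (Ω : Set (En n)) (v : En n → ℝ) : ℝ :=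
  ⨆ x ∈ closure Ω, |v x|

/-- Convergence in `C⁰(s)`: uniform convergence on `s`. -/
def TendstoC0On {n : ℕ} (v : ℕ → En n → ℝ) (w : En n → ℝ) (s : Set (En n)) : Prop :=
  TendstoUniformlyOn (fun α x => v α x) w atTop s

/-- Convergence in `C¹(s)`. -/
def TendstoC1On {n : ℕ} (v : ℕ → En n → ℝ) (w : En n → ℝ) (s : Set (En n)) : Prop :=
  TendstoUniformlyOn (fun α x => v α x) w atTop s ∧
  TendstoUniformlyOn (fun α x => fderiv ℝ (v α) x) (fderiv ℝ w) atTop s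

/-- Convergence in `C²(s)`. -/
def TendstoC2On {n : ℕ} (v : ℕ → En n → ℝ) (w : En n → ℝ) (s : Set (En n)) : Prop :=
  TendstoUniformlyOn (fun α x => v α x) w atTop s ∧
  TendstoUniformlyOn (fun α x => fderiv ℝ (v α) x) (fderiv ℝ w) atTop s ∧
  TendstoUniformlyOn (fun α x => iteratedFDeriv ℝ 2 (v α) x) (iteratedFDeriv ℝ 2 w) atTop s

/-- Convergence in `C²_loc` on the region `s`: `C²` convergence on every compact subset. -/
def TendstoC2Loc {n : ℕ} (v : ℕ → En n → ℝ) (w : En n → ℝ) (s : Set (En n)) : Prop :=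
  ∀ K, K ⊆ s → IsCompact K → TendstoC2On v w K

/-- The standard bubble `B₀(x) = (1 + |x|²/(n(n-2)))^{-(n-2)/2}`. -/
def B0 (n : ℕ) (x : En n) : ℝ :=
  (1 + ‖x‖ ^ 2 / ((n : ℝ) * ((n : ℝ) - 2))) ^ (-(((n : ℝ) - 2) / 2))

/-- The rescaled bubble `B_α` centered at `x0` with concentration scale `μ`. -/
def bubble (n : ℕ) (μ : ℝ) (x0 : En n) (x : En n) : ℝ :=
  μ ^ (-(((n : ℝ) - 2) / 2)) * B0 n (μ⁻¹ • (x - x0))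

/-- `w = ΠB`: `w` solves `(-Δ + h) w = B^{2*-1}` in `Ω` with zero boundary values. -/
def IsBubbleProj {n : ℕ} (Ω : Set (En n)) (h : En n → ℝ) (μ : ℝ) (x0 : En n)
    (w : En n → ℝ) : Prop :=
  ContDiffOn ℝ 2 w (closure Ω) ∧
  (∀ x ∈ Ω, -lap w x + h x * w x = bubble n μ x0 x ^ (twoStar n - 1)) ∧
  ∀ x ∈ frontier Ω, w x = 0

/-- Weak `H¹₀(Ω)` convergence, tested against gradients of smooth test functions. -/
def WeakH10Tendsto {n : ℕ} (Ω : Set (En n)) (v : ℕ → En n → ℝ) (w : En n → ℝ) : Prop :=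
  ∀ ψ, TestFun Ω ψ →
    Tendsto (fun α => ∫ x in Ω, ⟪gradient (v α) x, gradient ψ x⟫)
      atTop (𝓝 (∫ x in Ω, ⟪gradient w x, gradient ψ x⟫))

/-- Strong `H¹₀(Ω)` convergence. -/
def StrongH10Tendsto {n : ℕ} (Ω : Set (En n)) (v : ℕ → En n → ℝ) (w : En n → ℝ) : Prop :=
  Tendsto (fun α => ∫ x in Ω, ‖gradient (v α) x - gradient w x‖ ^ 2) atTop (𝓝 0)

/-!
The distance to the boundary is `1`-Lipschitz, so `d(x) ≤ d(y) + |x - y|`. Splitting according to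
whether `|x - y| ≤ d(y)` or not gives `min {1, d(y) d(x) / |x - y|²} ≤ 2 d(y) / |x - y|`, and hence
`G_α(y, x) ≤ 2 |C₀| d(y) |x - y|^{1-n}`. The kernel `|z|^{1-n}` is integrable near the origin and at
most `1` away from it, so by translation invariance and absolute continuity of the integral
`sup_y ∫_U |x - y|^{1-n} dx` is finite when `|U|` is, and tends to `0` with `|U|`.
-/

open Module
open scoped ENNReal NNReal

lemma setLIntegral_comp_sub_right {A : Type*} [AddGroup A] [MeasurableSpace A] [MeasurableAdd A]
    (μ : Measure A) [μ.IsAddRightInvariant] (f : A → ℝ≥0∞) (U : Set A) (y : A) :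
    ∫⁻ x in U, f (x - y) ∂μ = ∫⁻ z in (· + y) ⁻¹' U, f z ∂μ := by
  simpa [← Set.preimage_comp, Function.comp_def] using
    (measurePreserving_sub_right μ y).setLIntegral_comp_preimage_emb
      (MeasurableEquiv.subRight y).measurableEmbedding f ((· + y) ⁻¹' U)

section RieszPotential

variable {E : Type*} [NormedAddCommGroup E] [MeasurableSpace E]

/-- The supremum over all `y` of the Riesz-type potentials `∫_U |x - y|^{-s} dμ(x)` of the set `U`;
it is the set function from which the constant `C(U)` is built. On the diagonal the real power
`0 ^ (-s)` is `0` or `1`, not infinite, which is immaterial when points are `μ`-null. -/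
def rieszPotentialSup (μ : Measure E) (s : ℝ) (U : Set E) : ℝ≥0∞ :=
  ⨆ y, ∫⁻ x in U, ENNReal.ofReal (‖x - y‖ ^ (-s)) ∂μ

lemma norm_setIntegral_le_mul_rieszPotentialSup {F : Type*} [NormedAddCommGroup F]
    [NormedSpace ℝ F] {μ : Measure E} [NullSingletonClass μ] {s c : ℝ} {U : Set E} {f : E → F}
    {y : E} (hc : 0 ≤ c) (hU : MeasurableSet U) (hfin : rieszPotentialSup μ s U ≠ ⊤)
    (hf : ∀ x ∈ U, x ≠ y → ‖f x‖ ≤ c * ‖x - y‖ ^ (-s)) :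
    ‖∫ x in U, f x ∂μ‖ ≤ c * (rieszPotentialSup μ s U).toReal := by
  have hf_ae : ∀ᵐ x ∂μ.restrict U, ‖f x‖ ≤ c * ‖x - y‖ ^ (-s) := by
    filter_upwards [ae_restrict_mem hU, ae_restrict_of_ae (Measure.ae_ne μ y)] with x hxU hxy
    exact hf x hxU hxy
  have hlintegral : ∫⁻ x in U, ENNReal.ofReal ‖f x‖ ∂μ
      ≤ ENNReal.ofReal c * rieszPotentialSup μ s U := calc
    ∫⁻ x in U, ENNReal.ofReal ‖f x‖ ∂μ
        ≤ ∫⁻ x in U, ENNReal.ofReal c * ENNReal.ofReal (‖x - y‖ ^ (-s)) ∂μ := by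
      refine lintegral_mono_ae ?_
      filter_upwards [hf_ae] with x hx
      rw [← ENNReal.ofReal_mul hc]
      exact ENNReal.ofReal_le_ofReal hx
    _ = ENNReal.ofReal c * ∫⁻ x in U, ENNReal.ofReal (‖x - y‖ ^ (-s)) ∂μ :=
      lintegral_const_mul' _ _ ENNReal.ofReal_ne_top
    _ ≤ ENNReal.ofReal c * rieszPotentialSup μ s U := by
      gcongr
      exact le_iSup (fun y ↦ ∫⁻ x in U, ENNReal.ofReal (‖x - y‖ ^ (-s)) ∂μ) y
  calc
    ‖∫ x in U, f x ∂μ‖ ≤ (∫⁻ x in U, ENNReal.ofReal ‖f x‖ ∂μ).toReal :=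
      norm_integral_le_lintegral_norm f
    _ ≤ (ENNReal.ofReal c * rieszPotentialSup μ s U).toReal :=
      ENNReal.toReal_mono (ENNReal.mul_ne_top ENNReal.ofReal_ne_top hfin) hlintegral
    _ = c * (rieszPotentialSup μ s U).toReal := by
      rw [ENNReal.toReal_mul, ENNReal.toReal_ofReal hc]

variable [BorelSpace E]

lemma setLIntegral_norm_rpow_neg_le (μ : Measure E) {s : ℝ} (hs : 0 ≤ s) (U : Set E) :
    ∫⁻ x in U, ENNReal.ofReal (‖x‖ ^ (-s)) ∂μ
      ≤ ∫⁻ x in U, ENNReal.ofReal (‖x‖ ^ (-s)) ∂μ.restrict (ball 0 1) + μ U := by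
  have houtside : ∀ x ∈ U \ ball (0 : E) 1, ENNReal.ofReal (‖x‖ ^ (-s)) ≤ 1 := fun x hx ↦
    ENNReal.ofReal_le_one.2 <| Real.rpow_le_one_of_one_le_of_nonpos
      (not_lt.1 fun h ↦ hx.2 (mem_ball_zero_iff.2 h)) (neg_nonpos.2 hs)
  rw [Measure.restrict_restrict' measurableSet_ball, ← lintegral_inter_add_sdiff _ U
    (measurableSet_ball (x := (0 : E)) (ε := 1))]
  gcongr
  calc
    ∫⁻ x in U \ ball 0 1, ENNReal.ofReal (‖x‖ ^ (-s)) ∂μ ≤ ∫⁻ _ in U \ ball 0 1, 1 ∂μ :=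
      setLIntegral_mono measurable_const houtside
    _ = μ (U \ ball 0 1) := setLIntegral_one _
    _ ≤ μ U := measure_mono Set.sdiff_subset

lemma setLIntegral_norm_sub_rpow_neg_le (μ : Measure E) [μ.IsAddRightInvariant] {s : ℝ}
    (hs : 0 ≤ s) (U : Set E) (y : E) :
    ∫⁻ x in U, ENNReal.ofReal (‖x - y‖ ^ (-s)) ∂μ
      ≤ ∫⁻ z in (· + y) ⁻¹' U, ENNReal.ofReal (‖z‖ ^ (-s)) ∂μ.restrict (ball 0 1) + μ U := by
  rw [setLIntegral_comp_sub_right μ (fun z ↦ ENNReal.ofReal (‖z‖ ^ (-s))),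
    ← measure_preimage_add_right μ y U]
  exact setLIntegral_norm_rpow_neg_le μ hs _

variable [NormedSpace ℝ E] [FiniteDimensional ℝ E]

lemma setLIntegral_ball_norm_rpow_neg_ne_top (μ : Measure E) [μ.IsAddHaarMeasure] {s : ℝ}
    (hs₀ : 0 ≤ s) (hs : s < finrank ℝ E) (r : ℝ) :
    ∫⁻ x in ball 0 r, ENNReal.ofReal (‖x‖ ^ (-s)) ∂μ ≠ ⊤ := by
  have hfinrank : 0 < finrank ℝ E := by exact_mod_cast hs₀.trans_lt hs
  refine (integrableOn_ball_of_norm_le_rpow (C := 1) hfinrank hs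
    (Eventually.of_forall fun x ↦ ?_)
    (measurable_norm.pow_const _).aestronglyMeasurable).lintegral_lt_top.ne
  rw [one_mul, Real.norm_of_nonneg (by positivity)]

lemma rieszPotentialSup_ne_top {μ : Measure E} [μ.IsAddHaarMeasure] {s : ℝ} (hs₀ : 0 ≤ s)
    (hs : s < finrank ℝ E) {U : Set E} (hU : μ U ≠ ⊤) : rieszPotentialSup μ s U ≠ ⊤ := by
  refine ne_top_of_le_ne_top
    (ENNReal.add_ne_top.2 ⟨setLIntegral_ball_norm_rpow_neg_ne_top μ hs₀ hs 1, hU⟩)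
    (iSup_le fun y ↦ (setLIntegral_norm_sub_rpow_neg_le μ hs₀ U y).trans ?_)
  exact add_le_add_left (setLIntegral_le_lintegral _ _) _

lemma exists_pos_rieszPotentialSup_le_of_measure_lt (μ : Measure E) [μ.IsAddHaarMeasure] {s : ℝ}
    (hs₀ : 0 ≤ s) (hs : s < finrank ℝ E) {ε : ℝ≥0∞} (hε : ε ≠ 0) :
    ∃ δ > 0, ∀ U : Set E, μ U < δ → rieszPotentialSup μ s U ≤ ε := by
  have hε_half : ε / 2 ≠ 0 := (ENNReal.half_pos hε).ne'
  obtain ⟨δ, hδ, hlocal⟩ := exists_pos_setLIntegral_lt_of_measure_lt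
    (setLIntegral_ball_norm_rpow_neg_ne_top μ hs₀ hs 1) hε_half
  refine ⟨min δ (ε / 2), lt_min hδ hε_half.bot_lt, fun U hU ↦ iSup_le fun y ↦ ?_⟩
  have htranslate : (μ.restrict (ball 0 1)) ((· + y) ⁻¹' U) < δ := calc
    (μ.restrict (ball 0 1)) ((· + y) ⁻¹' U) ≤ μ ((· + y) ⁻¹' U) := Measure.restrict_apply_le _ _
    _ = μ U := measure_preimage_add_right μ y U
    _ < δ := hU.trans_le (min_le_left _ _)
  calc
    ∫⁻ x in U, ENNReal.ofReal (‖x - y‖ ^ (-s)) ∂μ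
        ≤ ∫⁻ z in (· + y) ⁻¹' U, ENNReal.ofReal (‖z‖ ^ (-s)) ∂μ.restrict (ball 0 1) + μ U :=
      setLIntegral_norm_sub_rpow_neg_le μ hs₀ U y
    _ ≤ ε / 2 + ε / 2 := add_le_add (hlocal _ htranslate).le (hU.le.trans (min_le_right _ _))
    _ = ε := ENNReal.add_halves ε

lemma exists_pos_mul_toReal_rieszPotentialSup_lt (μ : Measure E) [μ.IsAddHaarMeasure] {s : ℝ}
    (hs₀ : 0 ≤ s) (hs : s < finrank ℝ E) (c : ℝ) {ε : ℝ} (hε : 0 < ε) :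
    ∃ δ > (0 : ℝ), ∀ U : Set E, μ U < ENNReal.ofReal δ →
      c * (rieszPotentialSup μ s U).toReal < ε := by
  obtain ⟨η, hη, hcη⟩ : ∃ η > 0, |c| * η < ε := exists_pos_mul_lt hε |c|
  obtain ⟨δ, hδ, hsmall⟩ := exists_pos_rieszPotentialSup_le_of_measure_lt μ hs₀ hs
    (ENNReal.ofReal_pos.2 hη).ne'
  obtain ⟨δ', -, hδ'_pos, hδ'⟩ := ENNReal.lt_iff_exists_real_btwn.1 hδ
  refine ⟨δ', ENNReal.ofReal_pos.1 hδ'_pos, fun U hU ↦ ?_⟩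
  calc
    c * (rieszPotentialSup μ s U).toReal ≤ |c| * η := by
      gcongr
      · exact le_abs_self c
      · exact ENNReal.toReal_le_of_le_ofReal hη.le (hsmall U (hU.trans hδ'))
    _ < ε := hcη

end RieszPotential

lemma min_one_mul_div_sq_le {a b r K : ℝ} (ha : 0 ≤ a) (hK : 0 ≤ K) (hr : 0 < r)
    (hab : b ≤ a + K * r) : min 1 (a * b / r ^ 2) ≤ (1 + K) * a / r := by
  rcases le_total r a with hra | har
  · refine (min_le_left _ _).trans ((one_le_div hr).2 ?_)
    linarith [mul_nonneg hK ha]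
  · have hb : b ≤ (1 + K) * r := by linarith
    calc
      min 1 (a * b / r ^ 2) ≤ a * b / r ^ 2 := min_le_right _ _
      _ ≤ a * ((1 + K) * r) / r ^ 2 := by gcongr
      _ = (1 + K) * a / r := by field_simp

lemma mul_rpow_mul_min_one_le {C a b r K p : ℝ} (ha : 0 ≤ a) (hb : 0 ≤ b) (hK : 0 ≤ K)
    (hr : 0 < r) (hab : b ≤ a + K * r) :
    C * r ^ (2 - p) * min 1 (a * b / r ^ 2) ≤ (1 + K) * |C| * a * r ^ (-(p - 1)) := by
  have : 0 ≤ min 1 (a * b / r ^ 2) := le_min zero_le_one (by positivity)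
  have hpow : r ^ (2 - p) = r ^ (-(p - 1)) * r := by
    rw [← Real.rpow_add_one hr.ne']
    ring_nf
  calc
    C * r ^ (2 - p) * min 1 (a * b / r ^ 2) ≤ |C| * r ^ (2 - p) * ((1 + K) * a / r) := by
      gcongr
      · exact le_abs_self C
      · exact min_one_mul_div_sq_le ha hK hr hab
    _ = (1 + K) * |C| * a * r ^ (-(p - 1)) := by
      rw [hpow]
      field_simp

theorem statement8_general {E F ι : Type*} [NormedAddCommGroup E] [NormedSpace ℝ E]
    [FiniteDimensional ℝ E] [MeasurableSpace E] [BorelSpace E] [NormedAddCommGroup F]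
    [NormedSpace ℝ F] (μ : Measure E) [μ.IsAddHaarMeasure] {p : ℝ} (hp₁ : 1 ≤ p)
    (hp : p < finrank ℝ E + 1) {d : E → ℝ} {K : ℝ≥0} (hd : LipschitzWith K d)
    (hd₀ : ∀ x, 0 ≤ d x) {Ω : Set E} {G : ι → E → E → F} {C₀ : ℝ}
    (hG : ∀ i, ∀ y ∈ Ω, ∀ x ∈ Ω, x ≠ y →
      ‖G i y x‖ ≤ C₀ * ‖y - x‖ ^ (2 - p) * min 1 (d y * d x / ‖y - x‖ ^ 2)) :
    ∃ C : Set E → ℝ,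
      (∀ U ⊆ Ω, MeasurableSet U → μ U ≠ ⊤ → ∀ i, ∀ y ∈ Ω,
        ‖∫ x in U, G i y x ∂μ‖ ≤ C U * d y) ∧
      (∀ ε > (0 : ℝ), ∃ δ > (0 : ℝ), ∀ U : Set E, μ U < ENNReal.ofReal δ → C U < ε) := by
  have hs₀ : 0 ≤ p - 1 := sub_nonneg.2 hp₁
  have hs : p - 1 < finrank ℝ E := sub_lt_iff_lt_add.2 hp
  have : Nontrivial E := nontrivial_of_finrank_pos (R := ℝ) (by exact_mod_cast hs₀.trans_lt hs)
  refine ⟨fun U ↦ (1 + K) * |C₀| * (rieszPotentialSup μ (p - 1) U).toReal,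
    fun U hUΩ hU hUfin i y hy ↦ ?_,
    fun ε hε ↦ exists_pos_mul_toReal_rieszPotentialSup_lt μ hs₀ hs _ hε⟩
  have hkernel : ∀ x ∈ U, x ≠ y →
      ‖G i y x‖ ≤ (1 + K) * |C₀| * d y * ‖x - y‖ ^ (-(p - 1)) := fun x hx hxy ↦ by
    rw [norm_sub_rev x y]
    refine (hG i y hy x (hUΩ hx) hxy).trans (mul_rpow_mul_min_one_le (hd₀ y) (hd₀ x) K.coe_nonneg
      (norm_sub_pos_iff.2 hxy.symm) ?_)
    rw [← dist_eq_norm, dist_comm]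
    exact hd.le_add_mul x y
  have hdy : 0 ≤ d y := hd₀ y
  calc
    ‖∫ x in U, G i y x ∂μ‖
        ≤ (1 + K) * |C₀| * d y * (rieszPotentialSup μ (p - 1) U).toReal :=
      norm_setIntegral_le_mul_rieszPotentialSup (by positivity) hU
        (rieszPotentialSup_ne_top hs₀ hs hUfin) hkernel
    _ = (1 + K) * |C₀| * (rieszPotentialSup μ (p - 1) U).toReal * d y := by ring

/-- **Proposition (Green's function integral estimate).**
Let `Ω ⊂ ℝⁿ` (`n ≥ 3`) be a smooth bounded open set and `(G_α)` functions on `Ω × Ω` off the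
diagonal satisfying `0 ≤ G_α(y,x) ≤ C₀ |y−x|^{2−n} min{1, d(y,∂Ω)d(x,∂Ω)/|y−x|²}`.
Then for every open `U ⊆ Ω` there is a constant `C(U)`, tending to `0` as `|U| → 0`, with
`∫_U G_α(y,x) dx ≤ C(U) d(y,∂Ω)` for all `y ∈ Ω` and all `α`. -/
theorem statement8
    (n : ℕ) (hn : 3 ≤ n)
    (Ω : Set (En n)) (hΩo : IsOpen Ω) (hΩb : Bornology.IsBounded Ω)
    (G : ℕ → En n → En n → ℝ) (C₀ : ℝ)
    (hG : ∀ α, ∀ y ∈ Ω, ∀ x ∈ Ω, x ≠ y →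
      0 ≤ G α y x ∧
      G α y x ≤ C₀ * ‖y - x‖ ^ ((2 : ℝ) - n) *
        min 1 (infDist y (frontier Ω) * infDist x (frontier Ω) / ‖y - x‖ ^ 2)) :
    ∃ C : Set (En n) → ℝ,
      (∀ U : Set (En n), IsOpen U → U ⊆ Ω → ∀ α, ∀ y ∈ Ω,
        (∫ x in U, G α y x) ≤ C U * infDist y (frontier Ω)) ∧
      (∀ ε > (0 : ℝ), ∃ δ > (0 : ℝ), ∀ U : Set (En n), IsOpen U → U ⊆ Ω →
        volume U < ENNReal.ofReal δ → C U < ε) := by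
  obtain ⟨C, hbound, hsmall⟩ := statement8_general volume (p := n) (by norm_cast; omega)
    (by simp) (lipschitz_infDist_pt (frontier Ω)) (fun _ ↦ infDist_nonneg)
    fun α y hy x hx hxy ↦ (Real.norm_of_nonneg (hG α y hy x hx hxy).1).trans_le
      (hG α y hy x hx hxy).2
  refine ⟨C, fun U hUo hU α y hy ↦ (Real.le_norm_self _).trans
    (hbound U hU hUo.measurableSet (hΩb.subset hU).measure_lt_top.ne α y hy), fun ε hε ↦ ?_⟩
  obtain ⟨δ, hδ, hlt⟩ := hsmall ε hε
  exact ⟨δ, hδ, fun U _ _ ↦ hlt U⟩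
end
end

section
/- Let n ≥ 3, Ω₀ := (−∞,1) × ℝ^{n−1} and, for x ∈ Ω₀, define 𝓗̃(x) := 2 n^{(n−4)/2} (n−2)^{(n−2)/2} ω_{n−1}^{−1} (x₁ − 1) ∫_{∂Ω₀} |y|^{2−n} |x−y|^{−n} dσ(y), and let D₀ = 2 n^{(n−4)/2}(n−2)^{(n−2)/2}/ω_{n−1}. Then ∂₁𝓗̃(0)/D₀ = ∫_{∂Ω₀}|y|^{2−2n}dσ(y) − n∫_{∂Ω₀}|y|^{−2n}dσ(y) = −((n−2)/2) ∫_{∂Ω₀}|y|^{2−2n}dσ(y) < 0; in particular ∂₁𝓗̃(0) < 0. -/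
open MeasureTheory Filter Topology Metric
open scoped RealInnerProductSpace

noncomputable section

open scoped ENNReal

/-- The first basis vector direction index. -/
def e0 (n : ℕ) (h : 0 < n) : Fin n := ⟨0, h⟩

/-- The half-space `Ω₀ = (−∞,1) × ℝ^{n−1}`. -/
def halfSpace (n : ℕ) (h : 0 < n) : Set (En n) := {x : En n | x (e0 n h) < 1}

/-- The hyperplane `∂Ω₀ = {1} × ℝ^{n−1}`. -/
def hyperplane (n : ℕ) (h : 0 < n) : Set (En n) := {x : En n | x (e0 n h) = 1}

/-- `ω_{n−1}`: the surface area of the unit sphere `𝕊^{n−1} ⊂ ℝⁿ`, as the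
`(n−1)`-dimensional Hausdorff measure of the unit sphere. -/
def sphereArea (n : ℕ) : ℝ := (μH[((n : ℝ) - 1)] (Metric.sphere (0 : En n) 1)).toReal

/-- The constant `D₀ = 2 n^{(n−4)/2} (n−2)^{(n−2)/2} / ω_{n−1}`. -/
def D0const (n : ℕ) : ℝ :=
  2 * (n : ℝ) ^ (((n : ℝ) - 4) / 2) * ((n : ℝ) - 2) ^ (((n : ℝ) - 2) / 2) / sphereArea n

/-- The harmonic extension `𝓗̃(x) = D₀ (x₁ − 1) ∫_{∂Ω₀} |y|^{2−n} |x−y|^{−n} dσ(y)`,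
where `dσ` is the `(n−1)`-dimensional (Hausdorff) surface measure on `∂Ω₀`. -/
def HT (n : ℕ) (h : 0 < n) (x : En n) : ℝ :=
  D0const n * (x (e0 n h) - 1) *
    ∫ y in hyperplane n h, ‖y‖ ^ ((2 : ℝ) - n) * ‖x - y‖ ^ (-(n : ℝ)) ∂(μH[((n : ℝ) - 1)])

/-!
Write `d = n - 1`. Since `𝓗̃ = D₀ (x₁ - 1) ∫ |y|^{2-n} |x - y|^{-n} dσ(y)`, the product rule at `0`
gives one term from the factor `x₁ - 1` and one from the kernel, whose `x₁`-derivative at `0` is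
`n |y|^{2-n} |y|^{-n-2} y₁` with `y₁ = 1` on `∂Ω₀`. To compare the two integrals, parametrize `∂Ω₀`
isometrically by `z ↦ e₁ + z` with `z ⟂ e₁`, so that `|y|² = 1 + |z|²`. In polar coordinates the
relation between consecutive even exponents,
`r ∫ (1 + |z|²)^{-(r+2)/2} dz = (r - d) ∫ (1 + |z|²)^{-r/2} dz` for `r > d`,
says that the derivative of `t^d (1 + t²)^{-r/2}` has integral zero over `(0, ∞)`; the theorem is
the case `r = 2d`, where the ratio is `1/2`. Finally `D₀ > 0` requires `0 < ω_{n-1} < ∞` for the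
Hausdorff measure: the sphere projects onto the unit ball of a hyperplane by a 1-Lipschitz map, and
is covered by finitely many images of balls under inverse stereographic projections.
-/

open Module (finrank)

section Sphere

variable {E : Type*} [NormedAddCommGroup E] [InnerProductSpace ℝ E]

lemma ball_subset_orthogonalProjectionOnto_image_sphere {v : E} (hv : ‖v‖ = 1) :
    ball 0 1 ⊆ (ℝ ∙ v)ᗮ.orthogonalProjectionOnto '' sphere 0 1 := by
  intro z hz
  rw [mem_ball_zero_iff] at hz
  have hzv : ⟪(z : E), v⟫ = 0 := Submodule.mem_orthogonal_singleton_iff_inner_left.mp z.2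
  have hproj : (ℝ ∙ v)ᗮ.orthogonalProjectionOnto v = 0 :=
    Submodule.orthogonalProjectionOnto_apply_of_mem_orthogonal
      ((ℝ ∙ v).le_orthogonal_orthogonal (Submodule.mem_span_singleton_self v))
  refine ⟨z + √(1 - ‖z‖ ^ 2) • v, ?_, by simp [hproj]⟩
  have hsq : ‖(z : E) + √(1 - ‖z‖ ^ 2) • v‖ ^ 2 = 1 := by
    rw [norm_add_sq_real, inner_smul_right, hzv, norm_smul, hv, mul_one, Real.norm_eq_abs, sq_abs,
      Real.sq_sqrt (by nlinarith [norm_nonneg z]), Submodule.coe_norm]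
    ring
  rw [mem_sphere_zero_iff_norm]
  exact (pow_eq_one_iff_of_nonneg (norm_nonneg _) two_ne_zero).mp hsq

lemma stereoInvFunAux_image_closedBall_mem_nhdsWithin_sphere {v : E} (hv : ‖v‖ = 1) :
    (fun z : (ℝ ∙ (-v))ᗮ => stereoInvFunAux (-v) (z : E)) '' closedBall 0 1 ∈ 𝓝[sphere 0 1] v := by
  have hnv : ‖-v‖ = 1 := by rwa [norm_neg]
  let p : sphere (0 : E) 1 := ⟨v, by simpa using hv⟩
  have hp : (stereographic hnv).symm 0 = p := by
    have hpole : stereographic hnv p = 0 := stereographic_neg_apply p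
    rw [← hpole]
    exact (stereographic hnv).left_inv (ne_neg_of_mem_unit_sphere ℝ p)
  have hopen : (stereographic hnv).symm '' ball 0 1 ∈ 𝓝 p :=
    ((isOpenEmbedding_stereographic_symm hnv).isOpenMap _ isOpen_ball).mem_nhds
      ⟨0, mem_ball_self one_pos, hp⟩
  have hval := image_mem_map (m := Subtype.val) hopen
  rw [map_nhds_subtype_val] at hval
  refine mem_of_superset hval ?_
  rw [Set.image_image]
  exact Set.image_mono ball_subset_closedBall

variable [FiniteDimensional ℝ E]

lemma cast_finrank_orthogonal_span_singleton {v : E} (hv : v ≠ 0) :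
    (finrank ℝ (ℝ ∙ v)ᗮ : ℝ) = finrank ℝ E - 1 := by
  have hadd := (ℝ ∙ v).finrank_add_finrank_orthogonal
  rw [finrank_span_singleton hv] at hadd
  rw [← hadd]
  push_cast
  ring

lemma finrank_sub_one_nonneg {v : E} (hv : v ≠ 0) : (0 : ℝ) ≤ finrank ℝ E - 1 := by
  rw [← cast_finrank_orthogonal_span_singleton hv]
  positivity

variable [MeasurableSpace E] [BorelSpace E]

lemma isAddHaarMeasure_hausdorffMeasure_orthogonal_span_singleton {v : E} (hv : v ≠ 0) :
    (μH[(finrank ℝ E : ℝ) - 1] : Measure (ℝ ∙ v)ᗮ).IsAddHaarMeasure := by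
  rw [← cast_finrank_orthogonal_span_singleton hv]
  exact isAddHaarMeasure_hausdorffMeasure

lemma hausdorffMeasure_sphere_pos [Nontrivial E] :
    0 < μH[(finrank ℝ E : ℝ) - 1] (sphere (0 : E) 1) := by
  obtain ⟨v, hv⟩ := exists_norm_eq E zero_le_one
  have hv0 : v ≠ 0 := ne_zero_of_norm_ne_zero (hv ▸ one_ne_zero)
  have := isAddHaarMeasure_hausdorffMeasure_orthogonal_span_singleton hv0
  calc 0 < μH[(finrank ℝ E : ℝ) - 1] (ball (0 : (ℝ ∙ v)ᗮ) 1) := measure_ball_pos _ _ one_pos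
    _ ≤ μH[(finrank ℝ E : ℝ) - 1] ((ℝ ∙ v)ᗮ.orthogonalProjectionOnto '' sphere 0 1) :=
      measure_mono (ball_subset_orthogonalProjectionOnto_image_sphere hv)
    _ ≤ μH[(finrank ℝ E : ℝ) - 1] (sphere (0 : E) 1) :=
      hausdorffMeasure_orthogonalProjectionOnto_le _ _ _ (finrank_sub_one_nonneg hv0)

lemma hausdorffMeasure_image_closedBall_lt_top {F G : Type*} [NormedAddCommGroup F]
    [NormedSpace ℝ F] [FiniteDimensional ℝ F] [MeasurableSpace F] [BorelSpace F]
    [NormedAddCommGroup G] [NormedSpace ℝ G] [MeasurableSpace G] [BorelSpace G] {f : F → G}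
    (hf : ContDiff ℝ 1 f) (x : F) (R : ℝ) :
    μH[(finrank ℝ F : ℝ)] (f '' closedBall x R) < ⊤ := by
  obtain ⟨K, hK⟩ := hf.contDiffOn.exists_lipschitzOnWith one_ne_zero (convex_closedBall x R)
    (isCompact_closedBall x R)
  exact (hK.hausdorffMeasure_image_le (Nat.cast_nonneg _)).trans_lt
    (ENNReal.mul_lt_top (ENNReal.rpow_lt_top_of_nonneg (Nat.cast_nonneg _) ENNReal.coe_ne_top)
      (isCompact_closedBall x R).measure_lt_top)

lemma hausdorffMeasure_sphere_lt_top :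
    μH[(finrank ℝ E : ℝ) - 1] (sphere (0 : E) 1) < ⊤ := by
  refine (isCompact_sphere (0 : E) 1).measure_lt_top_of_nhdsWithin fun v hv => ?_
  rw [mem_sphere_zero_iff_norm] at hv
  have hv0 : -v ≠ 0 := neg_ne_zero.mpr (ne_zero_of_norm_ne_zero (hv ▸ one_ne_zero))
  refine ⟨_, stereoInvFunAux_image_closedBall_mem_nhdsWithin_sphere hv, ?_⟩
  rw [← cast_finrank_orthogonal_span_singleton hv0]
  exact hausdorffMeasure_image_closedBall_lt_top
    (contDiff_stereoInvFunAux.comp (ℝ ∙ (-v))ᗮ.subtypeL.contDiff) 0 1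

end Sphere

section JapaneseBracket

lemma sq_rpow_div_two {t : ℝ} (ht : 0 ≤ t) (s : ℝ) : (t ^ 2) ^ (s / 2) = t ^ s := by
  rw [Real.rpow_div_two_eq_sqrt s (sq_nonneg t), Real.sqrt_sq ht]

lemma hasDerivAt_pow_mul_rpow_one_add_sq (k : ℕ) (r t : ℝ) :
    HasDerivAt (fun t : ℝ => t ^ (k + 1) * (1 + t ^ 2) ^ (-r / 2))
      (t ^ k * (r * (1 + t ^ 2) ^ (-(r + 2) / 2) - (r - (k + 1)) * (1 + t ^ 2) ^ (-r / 2))) t := by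
  have hpos : 0 < 1 + t ^ 2 := by positivity
  have hbase : HasDerivAt (fun t : ℝ => 1 + t ^ 2) (2 * t) t := by
    simpa using (hasDerivAt_pow 2 t).const_add 1
  have hsplit : (1 + t ^ 2) ^ (-r / 2) = (1 + t ^ 2) * (1 + t ^ 2) ^ (-(r + 2) / 2) := by
    rw [mul_comm, ← Real.rpow_add_one hpos.ne']
    ring_nf
  have hexp : -r / 2 - 1 = -(r + 2) / 2 := by ring
  convert! (hasDerivAt_pow (k + 1) t).mul
    (hbase.rpow_const (p := -r / 2) (Or.inl hpos.ne')) using 1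
  rw [hexp, hsplit, Nat.add_sub_cancel]
  push_cast
  ring

lemma tendsto_pow_mul_rpow_one_add_sq_atTop {k : ℕ} {r : ℝ} (hr : k < r) :
    Tendsto (fun t : ℝ => t ^ k * (1 + t ^ 2) ^ (-r / 2)) atTop (𝓝 0) := by
  refine squeeze_zero' ?_ ?_ (tendsto_rpow_neg_atTop (sub_pos.mpr hr))
  · filter_upwards [eventually_ge_atTop 0] with t ht
    positivity
  · filter_upwards [eventually_gt_atTop 0] with t ht
    have hr0 : 0 ≤ r := (Nat.cast_nonneg k).trans hr.le
    calc t ^ k * (1 + t ^ 2) ^ (-r / 2) ≤ t ^ k * (t ^ 2) ^ (-r / 2) := by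
          gcongr ?_ * ?_
          exact Real.rpow_le_rpow_of_nonpos (by positivity) (by linarith) (by linarith [hr0])
      _ = t ^ (-(r - k)) := by
          rw [sq_rpow_div_two ht.le, ← Real.rpow_natCast t k, ← Real.rpow_add ht]
          ring_nf

variable {F : Type*} [NormedAddCommGroup F] [NormedSpace ℝ F] [FiniteDimensional ℝ F]
  [MeasurableSpace F] [BorelSpace F] (ν : Measure F) [ν.IsAddHaarMeasure]

lemma integral_rpow_neg_one_add_norm_sq_succ {r : ℝ} (hr : (finrank ℝ F : ℝ) < r) :
    r * ∫ z : F, (1 + ‖z‖ ^ 2) ^ (-(r + 2) / 2) ∂ν =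
      (r - finrank ℝ F) * ∫ z : F, (1 + ‖z‖ ^ 2) ^ (-r / 2) ∂ν := by
  rcases subsingleton_or_nontrivial F with _ | _
  · simp [Subsingleton.elim _ (0 : F), Module.finrank_zero_of_subsingleton (R := ℝ) (M := F)]
  have hint : Integrable (fun z : F => (1 + ‖z‖ ^ 2) ^ (-r / 2)) ν :=
    integrable_rpow_neg_one_add_norm_sq hr
  have hint' : Integrable (fun z : F => (1 + ‖z‖ ^ 2) ^ (-(r + 2) / 2)) ν :=
    integrable_rpow_neg_one_add_norm_sq (hr.trans (by linarith))
  obtain ⟨k, hk⟩ : ∃ k, finrank ℝ F = k + 1 := Nat.exists_eq_succ_of_ne_zero Module.finrank_pos.ne'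
  let f : ℝ → ℝ := fun t =>
    r * (1 + t ^ 2) ^ (-(r + 2) / 2) - (r - (k + 1)) * (1 + t ^ 2) ^ (-r / 2)
  have hf : Integrable (fun z : F => f ‖z‖) ν := (hint'.const_mul _).sub (hint.const_mul _)
  rw [integrable_fun_norm_addHaar, hk, Nat.add_sub_cancel] at hf
  have hradial : ∫ t in Set.Ioi 0, t ^ k • f t = 0 := by
    have hFTC := integral_Ioi_of_hasDerivAt_of_tendsto'
      (fun t _ => hasDerivAt_pow_mul_rpow_one_add_sq k r t) hf
      (tendsto_pow_mul_rpow_one_add_sq_atTop (hk ▸ hr))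
    rwa [zero_pow k.succ_ne_zero, zero_mul, sub_zero] at hFTC
  have hzero : ∫ z : F, f ‖z‖ ∂ν = 0 := by
    rw [integral_fun_norm_addHaar, hk, Nat.add_sub_cancel, hradial, smul_zero, smul_zero]
  rw [integral_sub (hint'.const_mul _) (hint.const_mul _), integral_const_mul,
    integral_const_mul, sub_eq_zero] at hzero
  rw [hzero, hk]
  push_cast
  rfl

end JapaneseBracket

section TangentHyperplane

variable {E : Type*} [NormedAddCommGroup E] [InnerProductSpace ℝ E]

/-- The affine hyperplane through `v` orthogonal to `v`. For a unit vector `v` it is the tangent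
hyperplane of the unit sphere at `v`; `∂Ω₀` is the case `v = e₁`. -/
def tangentHyperplane (v : E) : Set E := {y | ⟪v, y - v⟫ = 0}

lemma mem_tangentHyperplane_iff_inner_eq_one {v y : E} (hv : ‖v‖ = 1) :
    y ∈ tangentHyperplane v ↔ ⟪v, y⟫ = 1 := by
  rw [tangentHyperplane, Set.mem_ofPred_eq, inner_sub_right, real_inner_self_eq_norm_sq, hv,
    one_pow, sub_eq_zero]

lemma one_le_norm_of_mem_tangentHyperplane {v y : E} (hv : ‖v‖ = 1)
    (hy : y ∈ tangentHyperplane v) : 1 ≤ ‖y‖ := by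
  calc 1 = ⟪v, y⟫ := ((mem_tangentHyperplane_iff_inner_eq_one hv).mp hy).symm
    _ ≤ ‖v‖ * ‖y‖ := real_inner_le_norm v y
    _ = ‖y‖ := by rw [hv, one_mul]

lemma isClosed_tangentHyperplane (v : E) : IsClosed (tangentHyperplane v) :=
  isClosed_eq (by fun_prop) continuous_const

lemma range_add_orthogonal_span_singleton (v : E) :
    Set.range (fun z : (ℝ ∙ v)ᗮ => v + (z : E)) = tangentHyperplane v := by
  ext y
  constructor
  · rintro ⟨z, rfl⟩
    simpa [tangentHyperplane] using Submodule.mem_orthogonal_singleton_iff_inner_right.mp z.2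
  · intro hy
    exact ⟨⟨y - v, Submodule.mem_orthogonal_singleton_iff_inner_right.mpr hy⟩, by simp⟩

lemma isometry_add_submodule_coe (S : Submodule ℝ E) (v : E) :
    Isometry (fun z : S => v + (z : E)) :=
  (IsometryEquiv.addLeft v).isometry.comp S.subtypeₗᵢ.isometry

lemma norm_add_orthogonal_rpow {v : E} (hv : ‖v‖ = 1) (z : (ℝ ∙ v)ᗮ) (s : ℝ) :
    ‖v + (z : E)‖ ^ s = (1 + ‖z‖ ^ 2) ^ (s / 2) := by
  have hvz : ⟪v, (z : E)⟫ = 0 := Submodule.mem_orthogonal_singleton_iff_inner_right.mp z.2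
  have hsq : ‖v + (z : E)‖ ^ 2 = 1 + ‖z‖ ^ 2 := by
    rw [norm_add_sq_real, hvz, hv, Submodule.coe_norm]
    ring
  rw [← hsq, sq_rpow_div_two (norm_nonneg _)]

variable [MeasurableSpace E] [BorelSpace E]

lemma map_add_orthogonal_hausdorffMeasure (v : E) {d : ℝ} (hd : 0 ≤ d) :
    Measure.map (fun z : (ℝ ∙ v)ᗮ => v + (z : E)) μH[d] = μH[d].restrict (tangentHyperplane v) := by
  rw [(isometry_add_submodule_coe _ v).map_hausdorffMeasure (Or.inl hd),
    range_add_orthogonal_span_singleton]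

variable [CompleteSpace E]

lemma measurableEmbedding_add_orthogonal (v : E) :
    MeasurableEmbedding (fun z : (ℝ ∙ v)ᗮ => v + (z : E)) :=
  (isometry_add_submodule_coe _ v).isClosedEmbedding.measurableEmbedding

lemma setIntegral_tangentHyperplane_norm_rpow {v : E} (hv : ‖v‖ = 1) {d : ℝ} (hd : 0 ≤ d) (s : ℝ) :
    ∫ y in tangentHyperplane v, ‖y‖ ^ s ∂μH[d] =
      ∫ z : (ℝ ∙ v)ᗮ, (1 + ‖z‖ ^ 2) ^ (s / 2) ∂μH[d] := by
  rw [← map_add_orthogonal_hausdorffMeasure v hd,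
    (measurableEmbedding_add_orthogonal v).integral_map]
  simp only [norm_add_orthogonal_rpow hv]

end TangentHyperplane

section TangentHyperplaneIntegral

variable {E : Type*} [NormedAddCommGroup E] [InnerProductSpace ℝ E] [FiniteDimensional ℝ E]
  [MeasurableSpace E] [BorelSpace E]

lemma integrableOn_tangentHyperplane_norm_rpow {v : E} (hv : ‖v‖ = 1) {r : ℝ}
    (hr : (finrank ℝ E : ℝ) - 1 < r) :
    IntegrableOn (fun y => ‖y‖ ^ (-r)) (tangentHyperplane v) μH[(finrank ℝ E : ℝ) - 1] := by
  have hv0 : v ≠ 0 := ne_zero_of_norm_ne_zero (hv ▸ one_ne_zero)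
  have := isAddHaarMeasure_hausdorffMeasure_orthogonal_span_singleton hv0
  rw [IntegrableOn, ← map_add_orthogonal_hausdorffMeasure v (finrank_sub_one_nonneg hv0),
    (measurableEmbedding_add_orthogonal v).integrable_map_iff]
  simp only [Function.comp_def, norm_add_orthogonal_rpow hv]
  exact integrable_rpow_neg_one_add_norm_sq
    ((cast_finrank_orthogonal_span_singleton hv0).trans_lt hr)

lemma setIntegral_tangentHyperplane_norm_rpow_pos {v : E} (hv : ‖v‖ = 1) {r : ℝ}
    (hr : (finrank ℝ E : ℝ) - 1 < r) :
    0 < ∫ y in tangentHyperplane v, ‖y‖ ^ (-r) ∂μH[(finrank ℝ E : ℝ) - 1] := by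
  have hv0 : v ≠ 0 := ne_zero_of_norm_ne_zero (hv ▸ one_ne_zero)
  have := isAddHaarMeasure_hausdorffMeasure_orthogonal_span_singleton hv0
  rw [setIntegral_tangentHyperplane_norm_rpow hv (finrank_sub_one_nonneg hv0)]
  have hint : Integrable (fun z : (ℝ ∙ v)ᗮ => (1 + ‖z‖ ^ 2) ^ (-r / 2))
      μH[(finrank ℝ E : ℝ) - 1] :=
    integrable_rpow_neg_one_add_norm_sq ((cast_finrank_orthogonal_span_singleton hv0).trans_lt hr)
  have hcont : Continuous (fun z : (ℝ ∙ v)ᗮ => (1 + ‖z‖ ^ 2) ^ (-r / 2)) :=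
    (by fun_prop : Continuous fun z : (ℝ ∙ v)ᗮ => 1 + ‖z‖ ^ 2).rpow_const
      fun z => Or.inl (by positivity)
  exact integral_pos_of_integrable_nonneg_nonzero (x := 0) hcont hint
    (fun z => by positivity) (by simp)

lemma setIntegral_tangentHyperplane_norm_rpow_succ {v : E} (hv : ‖v‖ = 1) {r : ℝ}
    (hr : (finrank ℝ E : ℝ) - 1 < r) :
    r * ∫ y in tangentHyperplane v, ‖y‖ ^ (-(r + 2)) ∂μH[(finrank ℝ E : ℝ) - 1] =
      (r - (finrank ℝ E - 1)) *
        ∫ y in tangentHyperplane v, ‖y‖ ^ (-r) ∂μH[(finrank ℝ E : ℝ) - 1] := by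
  have hv0 : v ≠ 0 := ne_zero_of_norm_ne_zero (hv ▸ one_ne_zero)
  have := isAddHaarMeasure_hausdorffMeasure_orthogonal_span_singleton hv0
  have hd := finrank_sub_one_nonneg hv0
  rw [setIntegral_tangentHyperplane_norm_rpow hv hd, setIntegral_tangentHyperplane_norm_rpow hv hd,
    ← cast_finrank_orthogonal_span_singleton hv0]
  rw [← cast_finrank_orthogonal_span_singleton hv0] at hr this
  exact integral_rpow_neg_one_add_norm_sq_succ _ hr

end TangentHyperplaneIntegral

section RieszKernel

variable {E : Type*} [NormedAddCommGroup E] [InnerProductSpace ℝ E]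

/-- The Fréchet derivative of `x ↦ ‖x‖ ^ q` at a point `x ≠ 0`. -/
def normRpowFDeriv (q : ℝ) (x : E) : E →L[ℝ] ℝ := (q * ‖x‖ ^ (q - 2)) • innerSL ℝ x

lemma hasFDerivAt_norm_rpow_of_ne_zero (q : ℝ) {x : E} (hx : x ≠ 0) :
    HasFDerivAt (fun x : E => ‖x‖ ^ q) (normRpowFDeriv q x) x := by
  have hsq := (hasStrictFDerivAt_norm_sq x).hasFDerivAt.rpow_const (p := q / 2)
    (Or.inl (pow_ne_zero 2 (norm_ne_zero_iff.mpr hx)))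
  have hexp : q / 2 - 1 = (q - 2) / 2 := by ring
  simp only [hexp, sq_rpow_div_two (norm_nonneg _)] at hsq
  convert! hsq using 1
  rw [normRpowFDeriv, ← Nat.cast_smul_eq_nsmul ℝ, smul_smul]
  congr 1
  push_cast
  ring

lemma norm_normRpowFDeriv (q : ℝ) {x : E} (hx : x ≠ 0) :
    ‖normRpowFDeriv q x‖ = |q| * ‖x‖ ^ (q - 1) := by
  rw [normRpowFDeriv, norm_smul, innerSL_apply_norm, norm_mul, Real.norm_eq_abs,
    Real.norm_of_nonneg (by positivity), mul_assoc, ← Real.rpow_add_one (norm_ne_zero_iff.mpr hx)]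
  ring_nf

lemma normRpowFDeriv_neg_apply (q : ℝ) (x v : E) :
    normRpowFDeriv q (-x) v = -q * ‖x‖ ^ (q - 2) * ⟪x, v⟫ := by
  simp [normRpowFDeriv]

lemma half_norm_sub_le_norm_sub_of_mem_ball {F : Type*} [NormedAddCommGroup F] {δ : ℝ}
    {x₀ x y : F} (hy : δ ≤ ‖x₀ - y‖) (hx : x ∈ ball x₀ (δ / 2)) :
    ‖x₀ - y‖ / 2 ≤ ‖x - y‖ := by
  have htri := norm_sub_le_norm_sub_add_norm_sub x₀ x y
  rw [mem_ball_iff_norm'] at hx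
  linarith

lemma norm_normRpowFDeriv_sub_le {q δ : ℝ} {x₀ x y : E} (hq : q ≤ 1) (hδ : 0 < δ)
    (hy : δ ≤ ‖x₀ - y‖) (hx : x ∈ ball x₀ (δ / 2)) :
    ‖normRpowFDeriv q (x - y)‖ ≤ |q| * 2 ^ (1 - q) * δ⁻¹ * ‖x₀ - y‖ ^ q := by
  have hfar := half_norm_sub_le_norm_sub_of_mem_ball hy hx
  have hpos : 0 < ‖x₀ - y‖ := hδ.trans_le hy
  have hxy : x - y ≠ 0 := norm_pos_iff.mp (by linarith)
  calc ‖normRpowFDeriv q (x - y)‖ = |q| * ‖x - y‖ ^ (q - 1) := norm_normRpowFDeriv q hxy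
    _ ≤ |q| * (‖x₀ - y‖ / 2) ^ (q - 1) := by
      gcongr ?_ * ?_
      exact Real.rpow_le_rpow_of_nonpos (by positivity) hfar (by linarith)
    _ = |q| * 2 ^ (1 - q) * ‖x₀ - y‖⁻¹ * ‖x₀ - y‖ ^ q := by
      rw [Real.div_rpow hpos.le zero_le_two, Real.rpow_sub_one hpos.ne', ← neg_sub 1 q,
        Real.rpow_neg zero_le_two]
      field_simp
    _ ≤ |q| * 2 ^ (1 - q) * δ⁻¹ * ‖x₀ - y‖ ^ q := by gcongr

variable [MeasurableSpace E] {μ : Measure E} {w : E → ℝ} {q δ : ℝ} {x₀ : E}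

lemma ae_norm_smul_normRpowFDeriv_sub_le (hq : q ≤ 1) (hδ : 0 < δ)
    (hfar : ∀ᵐ y ∂μ, δ ≤ ‖x₀ - y‖) :
    ∀ᵐ y ∂μ, ∀ x ∈ ball x₀ (δ / 2), ‖w y • normRpowFDeriv q (x - y)‖ ≤
      |q| * 2 ^ (1 - q) * δ⁻¹ * ‖w y * ‖x₀ - y‖ ^ q‖ := by
  filter_upwards [hfar] with y hy x hx
  calc ‖w y • normRpowFDeriv q (x - y)‖ = ‖w y‖ * ‖normRpowFDeriv q (x - y)‖ := norm_smul _ _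
    _ ≤ ‖w y‖ * (|q| * 2 ^ (1 - q) * δ⁻¹ * ‖x₀ - y‖ ^ q) := by
      gcongr
      exact norm_normRpowFDeriv_sub_le hq hδ hy hx
    _ = |q| * 2 ^ (1 - q) * δ⁻¹ * ‖w y * ‖x₀ - y‖ ^ q‖ := by
      rw [norm_mul, Real.norm_of_nonneg (Real.rpow_nonneg (norm_nonneg _) q)]
      ring

variable [BorelSpace E] [SecondCountableTopology E]

lemma aestronglyMeasurable_smul_normRpowFDeriv_sub (hw : AEStronglyMeasurable w μ) :
    AEStronglyMeasurable (fun y => w y • normRpowFDeriv q (x₀ - y)) μ := by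
  have hcoeff : Measurable fun y => q * ‖x₀ - y‖ ^ (q - 2) := by fun_prop
  have hinner : Continuous fun y => innerSL ℝ (x₀ - y) := by fun_prop
  exact hw.smul (hcoeff.aestronglyMeasurable.smul hinner.aestronglyMeasurable)

lemma integrable_smul_normRpowFDeriv_sub (hq : q ≤ 1) (hδ : 0 < δ)
    (hfar : ∀ᵐ y ∂μ, δ ≤ ‖x₀ - y‖) (hw : AEStronglyMeasurable w μ)
    (hint : Integrable (fun y => w y * ‖x₀ - y‖ ^ q) μ) :
    Integrable (fun y => w y • normRpowFDeriv q (x₀ - y)) μ := by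
  refine (hint.norm.const_mul (|q| * 2 ^ (1 - q) * δ⁻¹)).mono'
    (aestronglyMeasurable_smul_normRpowFDeriv_sub hw) ?_
  filter_upwards [ae_norm_smul_normRpowFDeriv_sub_le hq hδ hfar] with y hy
  exact hy x₀ (mem_ball_self (half_pos hδ))

lemma hasFDerivAt_integral_mul_norm_sub_rpow (hq : q ≤ 1) (hδ : 0 < δ)
    (hfar : ∀ᵐ y ∂μ, δ ≤ ‖x₀ - y‖) (hw : AEStronglyMeasurable w μ)
    (hint : Integrable (fun y => w y * ‖x₀ - y‖ ^ q) μ) :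
    HasFDerivAt (fun x => ∫ y, w y * ‖x - y‖ ^ q ∂μ)
      (∫ y, w y • normRpowFDeriv q (x₀ - y) ∂μ) x₀ := by
  refine hasFDerivAt_integral_of_dominated_of_fderiv_le (ball_mem_nhds x₀ (half_pos hδ))
    (F' := fun x y => w y • normRpowFDeriv q (x - y)) (Eventually.of_forall fun x => ?_) hint
    (aestronglyMeasurable_smul_normRpowFDeriv_sub hw)
    (ae_norm_smul_normRpowFDeriv_sub_le hq hδ hfar) (hint.norm.const_mul _) ?_
  · have hkernel : Measurable fun y => ‖x - y‖ ^ q := by fun_prop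
    exact hw.mul hkernel.aestronglyMeasurable
  · filter_upwards [hfar] with y hy x hx
    have hxy : x - y ≠ 0 :=
      norm_pos_iff.mp (by linarith [half_norm_sub_le_norm_sub_of_mem_ball hy hx])
    simpa using ((hasFDerivAt_norm_rpow_of_ne_zero q hxy).comp x
      ((hasFDerivAt_id x).sub_const y)).const_mul (w y)

end RieszKernel

section TangentHyperplaneKernel

variable {E : Type*} [NormedAddCommGroup E] [InnerProductSpace ℝ E] {v : E}

lemma norm_rpow_mul_norm_zero_sub_rpow_eqOn_tangentHyperplane (hv : ‖v‖ = 1) (a q : ℝ) :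
    Set.EqOn (fun y => ‖y‖ ^ a * ‖0 - y‖ ^ q) (fun y => ‖y‖ ^ (a + q)) (tangentHyperplane v) := by
  intro y hy
  have hpos : 0 < ‖y‖ := one_pos.trans_le (one_le_norm_of_mem_tangentHyperplane hv hy)
  simp only [zero_sub, norm_neg, Real.rpow_add hpos]

variable [MeasurableSpace E] [BorelSpace E]

lemma ae_tangentHyperplane_one_le_norm_zero_sub (hv : ‖v‖ = 1) (μ : Measure E) :
    ∀ᵐ y ∂μ.restrict (tangentHyperplane v), 1 ≤ ‖0 - y‖ := by
  filter_upwards [ae_restrict_mem (isClosed_tangentHyperplane v).measurableSet] with y hy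
  simpa using one_le_norm_of_mem_tangentHyperplane hv hy

variable [FiniteDimensional ℝ E] {a q : ℝ}

lemma integrableOn_tangentHyperplane_kernel (hv : ‖v‖ = 1)
    (haq : (finrank ℝ E : ℝ) - 1 < -(a + q)) :
    IntegrableOn (fun y => ‖y‖ ^ a * ‖0 - y‖ ^ q) (tangentHyperplane v)
      μH[(finrank ℝ E : ℝ) - 1] := by
  rw [integrableOn_congr_fun (norm_rpow_mul_norm_zero_sub_rpow_eqOn_tangentHyperplane hv a q)
    (isClosed_tangentHyperplane v).measurableSet]
  simpa only [neg_neg] using integrableOn_tangentHyperplane_norm_rpow hv haq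

lemma hasFDerivAt_setIntegral_tangentHyperplane_kernel (hv : ‖v‖ = 1) (hq : q ≤ 1)
    (haq : (finrank ℝ E : ℝ) - 1 < -(a + q)) :
    HasFDerivAt
      (fun x => ∫ y in tangentHyperplane v, ‖y‖ ^ a * ‖x - y‖ ^ q ∂μH[(finrank ℝ E : ℝ) - 1])
      (∫ y in tangentHyperplane v, ‖y‖ ^ a • normRpowFDeriv q (0 - y)
        ∂μH[(finrank ℝ E : ℝ) - 1]) 0 :=
  hasFDerivAt_integral_mul_norm_sub_rpow hq one_pos
    (ae_tangentHyperplane_one_le_norm_zero_sub hv _)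
    (by fun_prop : Measurable fun y : E => ‖y‖ ^ a).aestronglyMeasurable
    (integrableOn_tangentHyperplane_kernel hv haq)

lemma setIntegral_tangentHyperplane_smul_normRpowFDeriv_apply (hv : ‖v‖ = 1) (hq : q ≤ 1)
    (haq : (finrank ℝ E : ℝ) - 1 < -(a + q)) :
    (∫ y in tangentHyperplane v, ‖y‖ ^ a • normRpowFDeriv q (0 - y)
        ∂μH[(finrank ℝ E : ℝ) - 1]) v =
      -q * ∫ y in tangentHyperplane v, ‖y‖ ^ (a + q - 2) ∂μH[(finrank ℝ E : ℝ) - 1] := by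
  have hint := integrable_smul_normRpowFDeriv_sub hq one_pos
    (ae_tangentHyperplane_one_le_norm_zero_sub hv _)
    (by fun_prop : Measurable fun y : E => ‖y‖ ^ a).aestronglyMeasurable
    (integrableOn_tangentHyperplane_kernel hv haq)
  rw [ContinuousLinearMap.integral_apply hint, ← integral_const_mul]
  refine setIntegral_congr_fun (isClosed_tangentHyperplane v).measurableSet fun y hy => ?_
  have hpos : 0 < ‖y‖ := one_pos.trans_le (one_le_norm_of_mem_tangentHyperplane hv hy)
  have hyv : ⟪y, v⟫ = 1 := by
    rw [real_inner_comm, (mem_tangentHyperplane_iff_inner_eq_one hv).mp hy]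
  simp only [zero_sub, smul_apply, normRpowFDeriv_neg_apply, hyv, smul_eq_mul,
    add_sub_assoc, Real.rpow_add hpos]
  ring

end TangentHyperplaneKernel

section HalfSpace

variable {n : ℕ}

lemma hyperplane_eq_tangentHyperplane (h : 0 < n) :
    hyperplane n h = tangentHyperplane (EuclideanSpace.single (e0 n h) 1) := by
  ext y
  rw [mem_tangentHyperplane_iff_inner_eq_one (by simp), EuclideanSpace.inner_single_left]
  simp [hyperplane]

lemma sphereArea_pos (h : 0 < n) : 0 < sphereArea n := by
  have : Nonempty (Fin n) := ⟨e0 n h⟩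
  have hpos := hausdorffMeasure_sphere_pos (E := En n)
  have hlt := hausdorffMeasure_sphere_lt_top (E := En n)
  rw [finrank_euclideanSpace_fin] at hpos hlt
  exact ENNReal.toReal_pos hpos.ne' hlt.ne

lemma D0const_pos (hn : 2 < n) : 0 < D0const n := by
  have hn2 : (0 : ℝ) < n - 2 := sub_pos.mpr (by exact_mod_cast hn)
  have := sphereArea_pos (zero_lt_two.trans hn)
  unfold D0const
  positivity

lemma setIntegral_hyperplane_norm_rpow_pos (hn : 1 < n) (h : 0 < n) :
    0 < ∫ y in hyperplane n h, ‖y‖ ^ ((2 : ℝ) - 2 * n) ∂(μH[((n : ℝ) - 1)]) := by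
  have hn1 : (1 : ℝ) < n := by exact_mod_cast hn
  have hpos := setIntegral_tangentHyperplane_norm_rpow_pos
    (v := (EuclideanSpace.single (e0 n h) 1 : En n)) (r := 2 * n - 2) (by simp)
    (by rw [finrank_euclideanSpace_fin]; linarith)
  rwa [finrank_euclideanSpace_fin, ← hyperplane_eq_tangentHyperplane, neg_sub] at hpos

lemma setIntegral_hyperplane_norm_rpow_neg_two_mul (hn : 1 < n) (h : 0 < n) :
    ∫ y in hyperplane n h, ‖y‖ ^ (-(2 * (n : ℝ))) ∂(μH[((n : ℝ) - 1)]) =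
      (∫ y in hyperplane n h, ‖y‖ ^ ((2 : ℝ) - 2 * n) ∂(μH[((n : ℝ) - 1)])) / 2 := by
  have hn1 : (0 : ℝ) < n - 1 := sub_pos.mpr (by exact_mod_cast hn)
  have hsucc := setIntegral_tangentHyperplane_norm_rpow_succ
    (v := (EuclideanSpace.single (e0 n h) 1 : En n)) (r := 2 * n - 2) (by simp)
    (by rw [finrank_euclideanSpace_fin]; linarith)
  rw [finrank_euclideanSpace_fin, ← hyperplane_eq_tangentHyperplane, neg_sub,
    sub_add_cancel] at hsucc
  refine mul_left_cancel₀ hn1.ne' ?_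
  linarith

lemma hasFDerivAt_HT_zero (hn : 1 < n) (h : 0 < n) :
    HasFDerivAt (HT n h)
      (-D0const n • (∫ y in hyperplane n h, ‖y‖ ^ ((2 : ℝ) - n) • normRpowFDeriv (-(n : ℝ)) (0 - y)
          ∂μH[((n : ℝ) - 1)]) +
        (∫ y in hyperplane n h, ‖y‖ ^ ((2 : ℝ) - n) * ‖0 - y‖ ^ (-(n : ℝ)) ∂μH[((n : ℝ) - 1)]) •
          D0const n • (EuclideanSpace.proj (e0 n h) : En n →L[ℝ] ℝ)) 0 := by
  have hn1 : (1 : ℝ) < n := by exact_mod_cast hn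
  have hkernel := hasFDerivAt_setIntegral_tangentHyperplane_kernel
    (v := (EuclideanSpace.single (e0 n h) 1 : En n)) (a := 2 - n) (q := -n) (by simp)
    (by linarith) (by rw [finrank_euclideanSpace_fin]; linarith)
  rw [finrank_euclideanSpace_fin, ← hyperplane_eq_tangentHyperplane] at hkernel
  have hfactor : HasFDerivAt (fun x : En n => D0const n * (x (e0 n h) - 1))
      (D0const n • (EuclideanSpace.proj (e0 n h) : En n →L[ℝ] ℝ)) 0 :=
    ((EuclideanSpace.proj (e0 n h) : En n →L[ℝ] ℝ).hasFDerivAt.sub_const 1).const_mul _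
  have hfactor_zero : -D0const n = D0const n * ((0 : En n) (e0 n h) - 1) := by simp
  rw [hfactor_zero]
  exact hfactor.mul hkernel

lemma fderiv_HT_zero_apply_single (hn : 1 < n) (h : 0 < n) :
    fderiv ℝ (HT n h) 0 (EuclideanSpace.single (e0 n h) 1) =
      D0const n * ((∫ y in hyperplane n h, ‖y‖ ^ ((2 : ℝ) - 2 * n) ∂(μH[((n : ℝ) - 1)])) -
        n * ∫ y in hyperplane n h, ‖y‖ ^ (-(2 * (n : ℝ))) ∂(μH[((n : ℝ) - 1)])) := by
  have hn1 : (1 : ℝ) < n := by exact_mod_cast hn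
  have hkernel := setIntegral_tangentHyperplane_smul_normRpowFDeriv_apply
    (v := (EuclideanSpace.single (e0 n h) 1 : En n)) (a := 2 - n) (q := -n) (by simp)
    (by linarith) (by rw [finrank_euclideanSpace_fin]; linarith)
  have hexp : (2 : ℝ) - n + -n - 2 = -(2 * n) := by ring
  rw [finrank_euclideanSpace_fin, ← hyperplane_eq_tangentHyperplane, neg_neg, hexp] at hkernel
  have hvalue : ∫ y in hyperplane n h, ‖y‖ ^ ((2 : ℝ) - n) * ‖0 - y‖ ^ (-(n : ℝ))
      ∂μH[((n : ℝ) - 1)] = ∫ y in hyperplane n h, ‖y‖ ^ ((2 : ℝ) - 2 * n) ∂μH[((n : ℝ) - 1)] := by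
    have hexp : (2 : ℝ) - 2 * n = 2 - n + -n := by ring
    rw [hyperplane_eq_tangentHyperplane, hexp]
    exact setIntegral_congr_fun (isClosed_tangentHyperplane _).measurableSet
      (norm_rpow_mul_norm_zero_sub_rpow_eqOn_tangentHyperplane (by simp) _ _)
  rw [(hasFDerivAt_HT_zero hn h).fderiv, add_apply, smul_apply, smul_apply, smul_apply, hkernel,
    hvalue]
  simp only [PiLp.proj_apply, PiLp.single_apply, if_true, smul_eq_mul]
  ring

end HalfSpace

/-- **Lemma (sign of ∂₁𝓗̃(0)).**
For `n ≥ 3` and `𝓗̃` as above, `∂₁𝓗̃(0)/D₀ = ∫_{∂Ω₀}|y|^{2−2n}dσ − n ∫_{∂Ω₀}|y|^{−2n}dσ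
= −((n−2)/2) ∫_{∂Ω₀}|y|^{2−2n}dσ < 0`, and in particular `∂₁𝓗̃(0) < 0`. -/
theorem statement16 (n : ℕ) (hn : 3 ≤ n) (h : 0 < n) :
    fderiv ℝ (HT n h) 0 (EuclideanSpace.single (e0 n h) 1) =
      D0const n * ((∫ y in hyperplane n h, ‖y‖ ^ ((2 : ℝ) - 2 * n) ∂(μH[((n : ℝ) - 1)])) -
        n * ∫ y in hyperplane n h, ‖y‖ ^ (-(2 * (n : ℝ))) ∂(μH[((n : ℝ) - 1)])) ∧
    (∫ y in hyperplane n h, ‖y‖ ^ ((2 : ℝ) - 2 * n) ∂(μH[((n : ℝ) - 1)])) -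
        n * (∫ y in hyperplane n h, ‖y‖ ^ (-(2 * (n : ℝ))) ∂(μH[((n : ℝ) - 1)])) =
      -(((n : ℝ) - 2) / 2) *
        ∫ y in hyperplane n h, ‖y‖ ^ ((2 : ℝ) - 2 * n) ∂(μH[((n : ℝ) - 1)]) ∧
    fderiv ℝ (HT n h) 0 (EuclideanSpace.single (e0 n h) 1) < 0 := by
  have hn1 : 1 < n := by lia
  have hderiv := fderiv_HT_zero_apply_single hn1 h
  have hratio := setIntegral_hyperplane_norm_rpow_neg_two_mul hn1 h
  refine ⟨hderiv, by rw [hratio]; ring, ?_⟩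
  have hn2 : (0 : ℝ) < n - 2 := sub_pos.mpr (by exact_mod_cast hn)
  calc fderiv ℝ (HT n h) 0 (EuclideanSpace.single (e0 n h) 1)
      = -(D0const n * ((n - 2) / 2 *
          ∫ y in hyperplane n h, ‖y‖ ^ ((2 : ℝ) - 2 * n) ∂(μH[((n : ℝ) - 1)]))) := by
        rw [hderiv, hratio]
        ring
    _ < 0 := neg_neg_of_pos <| mul_pos (D0const_pos hn) <| mul_pos (half_pos hn2) <|
        setIntegral_hyperplane_norm_rpow_pos hn1 h
end
end
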